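/- Let a, Γ satisfy 0 < a, 1 < Γ < 2, and 0 < a + Γ - 1 < 1, let ρ̃ ≥ 1/(Γ-1), P > 0, and c > 0 (representing m·n·e''_th/P). Then the determinant of the 4×4 symmetric matrix M with rows [[1+ρ̃, 0, -1, -1], [0, c, 0, 0], [-1, 0, 1/Γ, 0], [-1, 0, 0, 1/a]] equals (c/(aΓ))·(ρ̃ - (a+Γ-1)), and this determinant is strictly positive. -/

import Mathlib

/-!
Ordering the variables as `δu` followed by `(δs, δP̃, δΠ̃)` exhibits the matrix as a scalar corner
bordering the diagonal block `diag(c, 1/Γ, 1/a)`. Clearing the border with that block leaves the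
Schur complement `ρ - (a + Γ - 1)`, which carries the sign of the determinant because the block has
positive determinant. The polytropic bounds make it positive: `a + Γ - 1 < 1 < 1 / (Γ - 1) ≤ ρ`.
-/

open Matrix

theorem det_fromBlocks_mul₁₂ {m n R : Type*} [CommRing R] [Fintype m] [DecidableEq m]
    [Fintype n] [DecidableEq n] (A : Matrix m m R) (U : Matrix m n R) (C : Matrix n m R)
    (D : Matrix n n R) : (fromBlocks A (U * D) C D).det = (A - U * C).det * D.det := by
  have block_factorization :
      fromBlocks A (U * D) C D = fromBlocks 1 U 0 1 * fromBlocks (A - U * C) 0 C D := by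
    simp [fromBlocks_multiply]
  rw [block_factorization, det_mul, det_fromBlocks_zero₂₁, det_fromBlocks_zero₁₂, det_one, det_one,
    one_mul, one_mul]

/-- The quadratic form `2T(E⁰ - E¹)/P` of the information current of the bulk-viscous polytrope at
equilibrium, in the basis `(δu, δs, δP̃, δΠ̃)`. Here `ρ` is the density in units of the pressure `P`
and `c` stands for `m n e″_th / P`. -/
def informationMatrix {K : Type*} [Field K] (a Γ ρ c : K) : Matrix (Fin 4) (Fin 4) K :=
  of ![![1 + ρ, 0, -1, -1], ![0, c, 0, 0], ![-1, 0, 1 / Γ, 0], ![-1, 0, 0, 1 / a]]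

section Field

variable {K : Type*} [Field K] {a Γ : K}

theorem informationMatrix_eq_submatrix_fromBlocks (ha : a ≠ 0) (hΓ : Γ ≠ 0) (ρ c : K) :
    informationMatrix a Γ ρ c =
      (fromBlocks !![1 + ρ] (!![0, -Γ, -a] * diagonal ![c, 1 / Γ, 1 / a]) !![0; -1; -1]
        (diagonal ![c, 1 / Γ, 1 / a])).submatrix
        (finSumFinEquiv (m := 1) (n := 3)).symm (finSumFinEquiv (m := 1) (n := 3)).symm := by
  have row_eq : !![0, -Γ, -a] * diagonal ![c, 1 / Γ, 1 / a] = !![0, -1, -1] := by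
    ext i j
    fin_cases i; fin_cases j <;> simp [mul_diagonal, ha, hΓ]
  rw [row_eq]
  ext i j
  fin_cases i <;> fin_cases j <;> rfl

theorem det_informationMatrix (ha : a ≠ 0) (hΓ : Γ ≠ 0) (ρ c : K) :
    (informationMatrix a Γ ρ c).det = c / (a * Γ) * (ρ - (a + Γ - 1)) := by
  have schur_complement :
      (!![1 + ρ] - !![0, -Γ, -a] * !![(0 : K); -1; -1]).det = ρ - (a + Γ - 1) := by
    rw [det_fin_one, Matrix.sub_apply, mul_apply, Fin.sum_univ_three]
    change 1 + ρ - (0 * 0 + -Γ * -1 + -a * -1) = ρ - (a + Γ - 1)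
    ring
  have det_block : (diagonal ![c, 1 / Γ, 1 / a]).det = c / (a * Γ) := by
    simp only [det_diagonal, Fin.prod_univ_three, cons_val]
    field_simp
  rw [informationMatrix_eq_submatrix_fromBlocks ha hΓ, det_submatrix_equiv_self,
    det_fromBlocks_mul₁₂, schur_complement, det_block, mul_comm]

end Field

theorem stmt_10_general {K : Type*} [Field K] [LinearOrder K] [IsStrictOrderedRing K]
    {a Γ c : K} (ha : 0 < a) (hΓ : 0 < Γ) (hc : 0 < c) (ρ : K) :
    (informationMatrix a Γ ρ c).det = c / (a * Γ) * (ρ - (a + Γ - 1)) ∧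
      (0 < (informationMatrix a Γ ρ c).det ↔ a + Γ - 1 < ρ) := by
  have hdet := det_informationMatrix ha.ne' hΓ.ne' ρ c
  refine ⟨hdet, ?_⟩
  rw [hdet, mul_pos_iff_of_pos_left (div_pos hc (mul_pos ha hΓ)), sub_pos]

theorem stmt_10 (a Γ ρ P c : ℝ) (ha : 0 < a) (hΓ1 : 1 < Γ) (hΓ2 : Γ < 2)
    (h1 : 0 < a + Γ - 1) (h2 : a + Γ - 1 < 1)
    (hρ : 1/(Γ-1) ≤ ρ) (hP : 0 < P) (hc : 0 < c) :
    (Matrix.of ![![1+ρ, 0, -1, -1], ![0, c, 0, 0],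
                 ![-1, 0, 1/Γ, 0], ![-1, 0, 0, 1/a]]).det
      = (c/(a*Γ)) * (ρ - (a+Γ-1)) ∧
    0 < (Matrix.of ![![1+ρ, 0, -1, -1], ![0, c, 0, 0],
                 ![-1, 0, 1/Γ, 0], ![-1, 0, 0, 1/a]]).det := by
  have hρ_gt : a + Γ - 1 < ρ :=
    (h2.trans (one_lt_one_div (by linarith) (by linarith))).trans_le hρ
  exact (stmt_10_general ha (by linarith) hc ρ).imp_right (·.2 hρ_gt)
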